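/- arXiv:2405.09367 — 4 statements merged into one kernel-verified Lean document; each statement's English description precedes it below -/
import Mathlib

section
/- Let k ≥ 0 and r ≥ 1 be integers, e_0 < e_1 < ⋯ < e_r and z real numbers, and let f be of class C^{k+2} on a neighborhood of z with f^{(j)}(z) = 0 for 1 ≤ j ≤ k and f^{(k+1)}(z) ≠ 0. Assume that either k is even or there exists 0 ≤ j ≤ r−1 with e_j + e_{j+1} ≠ 0. Then the smoothness indicator I(h) = Σ_{j=0}^{r−1} ((f(z + e_{j+1}·h) − f(z + e_j·h))/(e_{j+1} − e_j))² satisfies I(h) = Θ(h^{2(k+1)}) as h → 0⁺: there exist constants 0 < C₁ ≤ C₂ and h₀ > 0 such that C₁·h^{2(k+1)} ≤ I(h) ≤ C₂·h^{2(k+1)} for all 0 < h < h₀. -/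
/-!
Near `z` one has `f x = f z + c (x - z) ^ n + o((x - z) ^ n)` with `n = k + 1` and `c ≠ 0`, so the
rescaled functions `t ↦ h⁻ⁿ (f (z + t h) - f z)` converge pointwise to the monomial `t ↦ c tⁿ` as
`h → 0`. The indicator is a continuous quadratic form in the node values that ignores additive
constants, so `h⁻²ⁿ I(h)` tends to the indicator of this monomial. The limit vanishes only if the
monomial takes equal values at all consecutive nodes, which the assumption on `k` and the nodes
rules out.
-/

open Asymptotics Filter Finset Topology

section Taylor

variable {E : Type*} [NormedAddCommGroup E] [NormedSpace ℝ E] {f : ℝ → E} {z : ℝ}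

lemma taylorWithinEval_succ_of_iteratedDeriv_eq_zero {k : ℕ} {s : Set ℝ} (hs : IsOpen s)
    (hz : z ∈ s) (hcrit : ∀ j, 1 ≤ j → j ≤ k → iteratedDeriv j f z = 0) (x : ℝ) :
    taylorWithinEval f (k + 1) s z x =
      f z + (x - z) ^ (k + 1) • ((k + 1).factorial : ℝ)⁻¹ • iteratedDeriv (k + 1) f z := by
  have iteratedDerivWithin_eq (j : ℕ) : iteratedDerivWithin j f s z = iteratedDeriv j f z :=
    iteratedDerivWithin_of_isOpen hs hz
  have taylorWithinEval_eq : taylorWithinEval f k s z x = f z := by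
    rw [taylor_within_apply, sum_range_succ', sum_eq_zero]
    · simp
    · intro j hj
      rw [iteratedDerivWithin_eq, hcrit (j + 1) j.succ_pos (mem_range.1 hj), smul_zero]
  rw [taylorWithinEval_succ, taylorWithinEval_eq, iteratedDerivWithin_eq, smul_smul, mul_comm,
    Nat.factorial_succ, Nat.cast_mul, Nat.cast_succ]

lemma isLittleO_sub_pow_smul_iteratedDeriv {k : ℕ} (hf : ContDiffAt ℝ (k + 1 : ℕ) f z)
    (hcrit : ∀ j, 1 ≤ j → j ≤ k → iteratedDeriv j f z = 0) :
    (fun x ↦ f x - f z -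
        (x - z) ^ (k + 1) • ((k + 1).factorial : ℝ)⁻¹ • iteratedDeriv (k + 1) f z)
      =o[𝓝 z] fun x ↦ (x - z) ^ (k + 1) := by
  obtain ⟨u, hu, hfu⟩ := hf.contDiffOn le_rfl (by simp)
  obtain ⟨ε, hε, hball⟩ := Metric.mem_nhds_iff.1 (by simpa using hu : u ∈ 𝓝 z)
  have hz : z ∈ Metric.ball z ε := Metric.mem_ball_self hε
  have taylor := taylor_isLittleO (convex_ball z ε) hz (hfu.mono hball)
  rw [Metric.isOpen_ball.nhdsWithin_eq hz] at taylor
  simpa only [taylorWithinEval_succ_of_iteratedDeriv_eq_zero Metric.isOpen_ball hz hcrit,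
    sub_add_eq_sub_sub] using taylor

lemma tendsto_inv_pow_smul_sub_of_isLittleO {n : ℕ} {c : E}
    (hf : (fun x ↦ f x - f z - (x - z) ^ n • c) =o[𝓝 z] fun x ↦ (x - z) ^ n) (t : ℝ) :
    Tendsto (fun h : ℝ ↦ (h ^ n)⁻¹ • (f (z + t * h) - f z)) (𝓝[≠] 0) (𝓝 (t ^ n • c)) := by
  have tendsto_point : Tendsto (fun h : ℝ ↦ z + t * h) (𝓝[≠] 0) (𝓝 z) :=
    ((by fun_prop : Continuous fun h : ℝ ↦ z + t * h).tendsto' 0 z (by simp)).mono_left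
      nhdsWithin_le_nhds
  have remainder : (fun h : ℝ ↦ f (z + t * h) - f z - (t * h) ^ n • c) =o[𝓝[≠] 0]
      fun h ↦ (t * h) ^ n := by
    simpa only [Function.comp_def, add_sub_cancel_left] using hf.comp_tendsto tendsto_point
  have scale : (fun h : ℝ ↦ (t * h) ^ n) =O[𝓝[≠] 0] fun h ↦ h ^ n := by
    simpa only [mul_pow] using (isBigO_refl (fun h : ℝ ↦ h ^ n) _).const_mul_left (t ^ n)
  have limit := (remainder.trans_isBigO scale).tendsto_inv_smul_nhds_zero.add_const (t ^ n • c)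
  rw [zero_add] at limit
  refine limit.congr' ?_
  filter_upwards [self_mem_nhdsWithin] with h hh
  have hpow : h ^ n ≠ 0 := pow_ne_zero n hh
  rw [smul_sub _ (f (z + t * h) - f z), mul_pow, mul_comm (t ^ n), mul_smul,
    inv_smul_smul₀ hpow, sub_add_cancel]

end Taylor

section SmoothnessIndicator

variable {E : Type*} [NormedAddCommGroup E] [NormedSpace ℝ E]

/-- The smoothness indicator of `g` on the nodes `e 0, …, e r`: the sum of the squared norms of its
slopes between consecutive nodes. The indicator `I(h)` of `f` at `z` with step `h` is its value at
`g = fun t ↦ f (z + t * h)`; the slopes are thus taken in the unscaled variable `t`. -/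
noncomputable def smoothnessIndicator (e : ℕ → ℝ) (r : ℕ) (g : ℝ → E) : ℝ :=
  ∑ j ∈ range r, ‖slope g (e j) (e (j + 1))‖ ^ 2

variable (e : ℕ → ℝ) (r : ℕ)

lemma smoothnessIndicator_nonneg (g : ℝ → E) : 0 ≤ smoothnessIndicator e r g :=
  sum_nonneg fun _ _ ↦ sq_nonneg _

lemma smoothnessIndicator_eq_sum_div_sq (g : ℝ → ℝ) :
    smoothnessIndicator e r g =
      ∑ j ∈ range r, ((g (e (j + 1)) - g (e j)) / (e (j + 1) - e j)) ^ 2 := by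
  simp only [smoothnessIndicator, slope_def_field, Real.norm_eq_abs, sq_abs]

lemma smoothnessIndicator_smul_sub_const (a : ℝ) (g : ℝ → E) (v : E) :
    smoothnessIndicator e r (fun t ↦ a • (g t - v)) = a ^ 2 * smoothnessIndicator e r g := by
  have slope_eq (s t : ℝ) : slope (fun t ↦ a • (g t - v)) s t = a • slope g s t := by
    rw [slope_def_module, slope_def_module, ← smul_sub, sub_sub_sub_cancel_right, smul_comm]
  simp only [smoothnessIndicator, slope_eq, norm_smul, mul_pow, Real.norm_eq_abs, sq_abs, mul_sum]

lemma tendsto_smoothnessIndicator {ι : Type*} {l : Filter ι} {G : ι → ℝ → E} {g : ℝ → E}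
    (hG : ∀ t, Tendsto (fun i ↦ G i t) l (𝓝 (g t))) :
    Tendsto (fun i ↦ smoothnessIndicator e r (G i)) l (𝓝 (smoothnessIndicator e r g)) :=
  tendsto_finsetSum _ fun _ _ ↦ (((hG _).sub (hG _)).const_smul _).norm.pow 2

variable {e r}

lemma smoothnessIndicator_ne_zero_iff {g : ℝ → E} :
    smoothnessIndicator e r g ≠ 0 ↔ ∃ j < r, g (e j) ≠ g (e (j + 1)) := by
  simp [smoothnessIndicator, sum_eq_zero_iff_of_nonneg, slope_eq_zero_iff]

lemma isTheta_smoothnessIndicator_of_isLittleO {f : ℝ → E} {z : ℝ} {n : ℕ} {c : E}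
    (hf : (fun x ↦ f x - f z - (x - z) ^ n • c) =o[𝓝 z] fun x ↦ (x - z) ^ n)
    (hc : c ≠ 0) (hne : ∃ j < r, e j ^ n ≠ e (j + 1) ^ n) :
    (fun h ↦ smoothnessIndicator e r fun t ↦ f (z + t * h)) =Θ[𝓝[≠] 0] fun h ↦ h ^ (2 * n) := by
  have limit_ne_zero : smoothnessIndicator e r (fun t ↦ t ^ n • c) ≠ 0 :=
    smoothnessIndicator_ne_zero_iff.2 <| hne.imp fun j hj ↦
      ⟨hj.1, (smul_left_injective ℝ hc).ne hj.2⟩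
  have limit := tendsto_smoothnessIndicator e r (tendsto_inv_pow_smul_sub_of_isLittleO hf)
  refine (isTheta_of_div_tendsto_nhds_ne_zero (limit.congr fun h ↦ ?_) limit_ne_zero).symm
  rw [smoothnessIndicator_smul_sub_const, inv_pow, ← pow_mul', inv_mul_eq_div]

end SmoothnessIndicator

section OrderedRing

variable {R : Type*} [Ring R] [LinearOrder R] [IsStrictOrderedRing R] {k : ℕ}

lemma pow_succ_ne_pow_succ {a b : R} (hab : a ≠ b) (h : Even k ∨ a + b ≠ 0) :
    a ^ (k + 1) ≠ b ^ (k + 1) := by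
  rw [Ne, pow_eq_pow_iff_of_ne_zero k.succ_ne_zero, Nat.even_add_one, eq_neg_iff_add_eq_zero]
  tauto

lemma exists_lt_pow_succ_ne_pow_succ {r : ℕ} (hr : 1 ≤ r) {e : ℕ → R}
    (he : ∀ j < r, e j ≠ e (j + 1)) (hexc : Even k ∨ ∃ j < r, e j + e (j + 1) ≠ 0) :
    ∃ j < r, e j ^ (k + 1) ≠ e (j + 1) ^ (k + 1) := by
  rcases hexc with heven | ⟨j, hj, hsum⟩
  · exact ⟨0, hr, pow_succ_ne_pow_succ (he 0 hr) (.inl heven)⟩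
  · exact ⟨j, hj, pow_succ_ne_pow_succ (he j hj) (.inr hsum)⟩

end OrderedRing

lemma exists_mul_le_and_le_mul_of_isTheta_nhdsGT {u v : ℝ → ℝ} {a : ℝ} (hu : ∀ x, 0 ≤ u x)
    (hv : ∀ x, 0 ≤ v x) (huv : u =Θ[𝓝[>] a] v) :
    ∃ C₁ C₂ b : ℝ, 0 < C₁ ∧ C₁ ≤ C₂ ∧ a < b ∧
      ∀ x, a < x → x < b → C₁ * v x ≤ u x ∧ u x ≤ C₂ * v x := by
  obtain ⟨C, hupper⟩ := huv.isBigO.bound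
  obtain ⟨D, hD, hlower⟩ := huv.isBigO_symm.exists_pos
  obtain ⟨b, hab, hb⟩ := mem_nhdsGT_iff_exists_Ioo_subset.1 (hupper.and hlower.bound)
  refine ⟨D⁻¹, max D⁻¹ C, b, inv_pos.2 hD, le_max_left _ _, hab, fun x hax hxb ↦ ?_⟩
  obtain ⟨hle, hge⟩ := hb ⟨hax, hxb⟩
  rw [Real.norm_of_nonneg (hu x), Real.norm_of_nonneg (hv x)] at hle hge
  exact ⟨(inv_mul_le_iff₀ hD).2 hge,
    hle.trans (mul_le_mul_of_nonneg_right (le_max_right _ _) (hv x))⟩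

theorem stmt_3_general {E : Type*} [NormedAddCommGroup E] [NormedSpace ℝ E] {k r : ℕ}
    (hr : 1 ≤ r) {e : ℕ → ℝ} (he : ∀ j < r, e j ≠ e (j + 1)) {z : ℝ} {f : ℝ → E}
    (hf : ContDiffAt ℝ (k + 1 : ℕ) f z)
    (hcrit : ∀ j, 1 ≤ j → j ≤ k → iteratedDeriv j f z = 0)
    (hk1 : iteratedDeriv (k + 1) f z ≠ 0)
    (hexc : Even k ∨ ∃ j < r, e j + e (j + 1) ≠ 0) :
    (fun h ↦ smoothnessIndicator e r fun t ↦ f (z + t * h))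
      =Θ[𝓝[≠] 0] fun h ↦ h ^ (2 * (k + 1)) :=
  isTheta_smoothnessIndicator_of_isLittleO (isLittleO_sub_pow_smul_iteratedDeriv hf hcrit)
    (smul_ne_zero (by positivity) hk1) (exists_lt_pow_succ_ne_pow_succ hr he hexc)

/-- **Smoothness indicator asymptotics at a critical point of exact order `k`.**
If `f` is `C^{k+2}` near `z`, has a critical point of exact order `k` at `z`, and either `k`
is even or some node pair is non-symmetric (`e j + e (j+1) ≠ 0`), then the simple smoothness
indicator `I(h) = Σ_j ((f(z+e_{j+1}h) - f(z+e_j h))/(e_{j+1}-e_j))²` is `Θ(h^{2(k+1)})`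
as `h → 0⁺`. -/
theorem stmt_3 (k r : ℕ) (hr : 1 ≤ r) (e : ℕ → ℝ)
    (he : ∀ i j : ℕ, i < j → j ≤ r → e i < e j)
    (z : ℝ) (f : ℝ → ℝ) (U : Set ℝ) (hU : U ∈ nhds z)
    (hf : ContDiffOn ℝ (k + 2 : ℕ) f U)
    (hcrit : ∀ j : ℕ, 1 ≤ j → j ≤ k → iteratedDeriv j f z = 0)
    (hk1 : iteratedDeriv (k + 1) f z ≠ 0)
    (hexc : Even k ∨ ∃ j : ℕ, j ≤ r - 1 ∧ e j + e (j + 1) ≠ 0) :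
    ∃ C₁ C₂ h₀ : ℝ, 0 < C₁ ∧ C₁ ≤ C₂ ∧ 0 < h₀ ∧
      ∀ h : ℝ, 0 < h → h < h₀ →
        C₁ * h ^ (2 * (k + 1)) ≤
            (∑ j ∈ Finset.range r,
              ((f (z + e (j + 1) * h) - f (z + e j * h)) / (e (j + 1) - e j)) ^ 2) ∧
          (∑ j ∈ Finset.range r,
              ((f (z + e (j + 1) * h) - f (z + e j * h)) / (e (j + 1) - e j)) ^ 2)
            ≤ C₂ * h ^ (2 * (k + 1)) := by
  have hf' : ContDiffAt ℝ (k + 1 : ℕ) f z :=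
    (hf.contDiffAt hU).of_le (by exact_mod_cast (k + 1).le_succ)
  have theta := stmt_3_general hr (fun j hj ↦ (he j (j + 1) j.lt_succ_self hj).ne) hf' hcrit hk1
    (hexc.imp_right fun ⟨j, hj, hsum⟩ ↦ ⟨j, by lia, hsum⟩)
  simpa only [smoothnessIndicator_eq_sum_div_sq] using
    exists_mul_le_and_le_mul_of_isTheta_nhdsGT (fun _ ↦ smoothnessIndicator_nonneg e r _)
      (fun h ↦ (even_two_mul (k + 1)).pow_nonneg h)
      (theta.mono (nhdsWithin_mono 0 fun _ hx ↦ ne_of_gt hx))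
end

section
/- Let m be an odd positive integer, b > 0 and z real numbers, and let f be of class C^{m+1} on a neighborhood of z with f^{(q)}(z) = 0 for every odd q with 1 ≤ q < m and f^{(m)}(z) ≠ 0. Then the symmetric difference quotient squared g(h) = ((f(z + b·h) − f(z − b·h))/(2b))² satisfies g(h) = Θ(h^{2m}) as h → 0⁺: there exist constants 0 < C₁ ≤ C₂ and h₀ > 0 such that C₁·h^{2m} ≤ g(h) ≤ C₂·h^{2m} for all 0 < h < h₀. -/
/-!
In the difference of the Taylor expansions of `f` at `z + t` and `z - t`, every even-order term
cancels and every odd-order term of order below `m` vanishes by hypothesis. What remains is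
`(2 t ^ m / m!) • f⁽ᵐ⁾(z) + o(t ^ m)`, so the difference has exact order `t ^ m` as `t → 0`.
-/

open Asymptotics Filter Topology

section

variable {E : Type*} [NormedAddCommGroup E] [NormedSpace ℝ E] {f : ℝ → E} {z : ℝ} {m : ℕ}

lemma taylor_isLittleO_of_contDiffAt (hf : ContDiffAt ℝ m f z) :
    (fun t ↦ f (z + t) - ∑ k ∈ Finset.range (m + 1), (t ^ k / k.factorial) • iteratedDeriv k f z)
      =o[𝓝 0] fun t ↦ t ^ m := by
  obtain ⟨s, hs, hfs⟩ := hf.contDiffOn le_rfl (by simp)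
  obtain ⟨ε, hε, hεs⟩ := Metric.mem_nhds_iff.1 (by simpa using hs)
  have hz : z ∈ Metric.ball z ε := Metric.mem_ball_self hε
  have htaylor := taylor_isLittleO (convex_ball z ε) hz (hfs.mono hεs)
  rw [Metric.isOpen_ball.nhdsWithin_eq hz] at htaylor
  have hshift : Tendsto (z + ·) (𝓝 0) (𝓝 z) :=
    (continuous_const_add z).tendsto' 0 z (add_zero z)
  refine (htaylor.comp_tendsto hshift).congr (fun t ↦ ?_) fun t ↦ by simp
  simp only [Function.comp_apply, taylor_within_apply, add_sub_cancel_left,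
    iteratedDerivWithin_of_isOpen Metric.isOpen_ball hz, div_eq_inv_mul]

lemma centralDiff_sub_isLittleO_of_odd (hm : Odd m) (hf : ContDiffAt ℝ m f z)
    (hodd : ∀ q, Odd q → q < m → iteratedDeriv q f z = 0) :
    (fun t ↦ f (z + t) - f (z - t) - t ^ m • (2 / m.factorial : ℝ) • iteratedDeriv m f z)
      =o[𝓝 0] fun t ↦ t ^ m := by
  have hpos := taylor_isLittleO_of_contDiffAt hf
  have hneg_tendsto : Tendsto (fun t : ℝ ↦ -t) (𝓝 0) (𝓝 0) := continuous_neg.tendsto' 0 0 neg_zero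
  have hpow : (fun t : ℝ ↦ (-t) ^ m) =O[𝓝 0] fun t ↦ t ^ m := isBigO_of_le _ fun t ↦ by simp
  have hneg := (hpos.comp_tendsto hneg_tendsto).trans_isBigO hpow
  refine (hpos.sub hneg).congr_left fun t ↦ ?_
  have hcancel : ∑ k ∈ Finset.range (m + 1), (t ^ k / k.factorial) • iteratedDeriv k f z
      - ∑ k ∈ Finset.range (m + 1), ((-t) ^ k / k.factorial) • iteratedDeriv k f z
      = t ^ m • (2 / m.factorial : ℝ) • iteratedDeriv m f z := by
    rw [← Finset.sum_sub_distrib, Finset.sum_range_succ, Finset.sum_eq_zero, zero_add,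
      hm.neg_pow, ← sub_smul, smul_smul]
    · congr 1
      ring
    · intro k hk
      rcases k.even_or_odd with hk_even | hk_odd
      · rw [hk_even.neg_pow, sub_self]
      · simp only [hodd k hk_odd (Finset.mem_range.1 hk), smul_zero, sub_self]
  rw [← hcancel, Function.comp_apply, ← sub_eq_add_neg]
  abel

lemma centralDiff_isTheta_pow_of_odd (hm : Odd m) (hf : ContDiffAt ℝ m f z)
    (hodd : ∀ q, Odd q → q < m → iteratedDeriv q f z = 0) (hm0 : iteratedDeriv m f z ≠ 0) :
    (fun t ↦ f (z + t) - f (z - t)) =Θ[𝓝 0] fun t ↦ t ^ m := by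
  have hcoeff : (2 / m.factorial : ℝ) • iteratedDeriv m f z ≠ 0 :=
    smul_ne_zero (by positivity) hm0
  have hlead : (fun t : ℝ ↦ t ^ m • (2 / m.factorial : ℝ) • iteratedDeriv m f z)
      =Θ[𝓝 0] fun t ↦ t ^ m := by
    simpa using (isTheta_refl (fun t : ℝ ↦ t ^ m) (𝓝 0)).smul
      (isTheta_const_const hcoeff (one_ne_zero (α := ℝ)))
  simpa only [Pi.add_def, add_sub_cancel]
    using hlead.add_isLittleO (centralDiff_sub_isLittleO_of_odd hm hf hodd)

lemma centralDiffQuot_isTheta_pow_of_odd {b : ℝ} (hb : b ≠ 0) (hm : Odd m)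
    (hf : ContDiffAt ℝ m f z) (hodd : ∀ q, Odd q → q < m → iteratedDeriv q f z = 0)
    (hm0 : iteratedDeriv m f z ≠ 0) :
    (fun h ↦ (2 * b)⁻¹ • (f (z + b * h) - f (z - b * h))) =Θ[𝓝 0] fun h ↦ h ^ m := by
  have hscale : Tendsto (b * ·) (𝓝 0) (𝓝 0) :=
    (continuous_const_mul b).tendsto' 0 0 (mul_zero b)
  have hdiff := centralDiff_isTheta_pow_of_odd hm hf hodd hm0
  have hpow : (fun h ↦ (b * h) ^ m) =Θ[𝓝 0] fun h ↦ h ^ m := by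
    simpa only [mul_pow] using (isTheta_const_mul_left (pow_ne_zero m hb)).2 isTheta_rfl
  have hcoeff : (2 * b)⁻¹ ≠ 0 := by positivity
  exact (isTheta_const_smul_left hcoeff).2 <|
    IsTheta.trans ⟨hdiff.1.comp_tendsto hscale, hdiff.2.comp_tendsto hscale⟩ hpow

end

lemma exists_eventually_bounds_of_isTheta {α E F : Type*} [SeminormedAddCommGroup E]
    [SeminormedAddCommGroup F] {l : Filter α} {u : α → E} {v : α → F} (huv : u =Θ[l] v) :
    ∃ C₁ C₂ : ℝ, 0 < C₁ ∧ C₁ ≤ C₂ ∧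
      ∀ᶠ x in l, C₁ * ‖v x‖ ≤ ‖u x‖ ∧ ‖u x‖ ≤ C₂ * ‖v x‖ := by
  obtain ⟨C, hupper⟩ := huv.1.bound
  obtain ⟨c, hc, hlower⟩ := huv.2.exists_pos
  refine ⟨c⁻¹, max c⁻¹ C, inv_pos.2 hc, le_max_left _ _, ?_⟩
  filter_upwards [hupper, hlower.bound] with x hx_upper hx_lower
  exact ⟨(inv_mul_le_iff₀ hc).2 hx_lower, hx_upper.trans (by gcongr; exact le_max_right _ _)⟩

theorem stmt_4_general {E : Type*} [NormedAddCommGroup E] [NormedSpace ℝ E] {f : ℝ → E}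
    {m : ℕ} {b z : ℝ} (hm : Odd m) (hb : b ≠ 0) (hf : ContDiffAt ℝ m f z)
    (hodd : ∀ q, Odd q → q < m → iteratedDeriv q f z = 0) (hm0 : iteratedDeriv m f z ≠ 0) :
    ∃ C₁ C₂ h₀ : ℝ, 0 < C₁ ∧ C₁ ≤ C₂ ∧ 0 < h₀ ∧
      ∀ h : ℝ, |h| < h₀ →
        C₁ * h ^ (2 * m) ≤ ‖(2 * b)⁻¹ • (f (z + b * h) - f (z - b * h))‖ ^ 2 ∧
          ‖(2 * b)⁻¹ • (f (z + b * h) - f (z - b * h))‖ ^ 2 ≤ C₂ * h ^ (2 * m) := by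
  have hΘ := (centralDiffQuot_isTheta_pow_of_odd hb hm hf hodd hm0).norm_left.pow 2
  obtain ⟨C₁, C₂, hC₁, hC₁₂, hbounds⟩ := exists_eventually_bounds_of_isTheta hΘ
  obtain ⟨h₀, hh₀, hball⟩ := Metric.eventually_nhds_iff.1 hbounds
  refine ⟨C₁, C₂, h₀, hC₁, hC₁₂, hh₀, fun h hh ↦ ?_⟩
  simpa only [norm_pow, Real.norm_eq_abs, abs_norm, ← pow_mul, mul_comm m 2,
    (even_two_mul m).pow_abs]
    using hball (by simpa using hh)

/-- **Symmetric node pair case.** If `m` is odd, all odd-order derivatives of `f` at `z` of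
order `< m` vanish and `f^{(m)}(z) ≠ 0`, then the squared symmetric difference quotient
`((f(z+bh) - f(z-bh))/(2b))²` is `Θ(h^{2m})` as `h → 0⁺`. -/
theorem stmt_4 (m : ℕ) (hm : Odd m) (hmpos : 0 < m) (b z : ℝ) (hb : 0 < b)
    (f : ℝ → ℝ) (U : Set ℝ) (hU : U ∈ nhds z)
    (hf : ContDiffOn ℝ (m + 1 : ℕ) f U)
    (hodd : ∀ q : ℕ, Odd q → 1 ≤ q → q < m → iteratedDeriv q f z = 0)
    (hm0 : iteratedDeriv m f z ≠ 0) :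
    ∃ C₁ C₂ h₀ : ℝ, 0 < C₁ ∧ C₁ ≤ C₂ ∧ 0 < h₀ ∧
      ∀ h : ℝ, 0 < h → h < h₀ →
        C₁ * h ^ (2 * m) ≤ ((f (z + b * h) - f (z - b * h)) / (2 * b)) ^ 2 ∧
          ((f (z + b * h) - f (z - b * h)) / (2 * b)) ^ 2 ≤ C₂ * h ^ (2 * m) := by
  obtain ⟨C₁, C₂, h₀, hC₁, hC₁₂, hh₀, hbounds⟩ := stmt_4_general hm hb.ne'
    ((hf.contDiffAt hU).of_le (by gcongr; exact m.le_succ))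
    (fun q hq ↦ hodd q hq hq.pos) hm0
  refine ⟨C₁, C₂, h₀, hC₁, hC₁₂, hh₀, fun h hpos hlt ↦ ?_⟩
  simpa only [smul_eq_mul, inv_mul_eq_div, Real.norm_eq_abs, sq_abs]
    using hbounds h (by rwa [abs_of_pos hpos])
end

section
/- Assume the WENO weight setup with f of class C^∞ on a neighborhood of z having a critical point of exact order k at z with 0 ≤ k ≤ R−2, and assume that either R ≥ 5, or k is even, or c_j + c_{j+1} ≠ 0 for every 0 ≤ j ≤ R−2. Then there exist C > 0 and h₀ > 0 such that for every ε > 0, every 0 < h < h₀ and every 0 ≤ i ≤ r': |α_{R,i,h} − 1/(r'+1)| ≤ C·h^{2s(R−2−k)}. -/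
/-- Simple smoothness indicator `I_{R,i,h}` on the nonuniform stencil `x_{i,h} = z + cᵢ h`,
with `r = ⌊(R-1)/2⌋`. -/
noncomputable def wenoI (R : ℕ) (c : ℕ → ℝ) (z : ℝ) (f : ℝ → ℝ) (i : ℕ) (h : ℝ) : ℝ :=
  ∑ j ∈ Finset.Ico i (i + (R - 1) / 2),
    ((f (z + c (j + 1) * h) - f (z + c j * h)) / (c (j + 1) - c j)) ^ 2

/-- Squared undivided difference `d_{R,h}` of `f` on the full stencil. -/
noncomputable def wenoD (R : ℕ) (c : ℕ → ℝ) (z : ℝ) (f : ℝ → ℝ) (h : ℝ) : ℝ :=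
  (((R - 1).factorial : ℝ) *
      ∑ i ∈ Finset.range R,
        f (z + c i * h) / ∏ j ∈ (Finset.range R).erase i, (c i - c j)) ^ 2

/-- Unnormalized WENO weight `α_{R,i,h}`, with `r' = ⌈(R-1)/2⌉ = R/2` (ℕ-division). -/
noncomputable def wenoAlpha (R : ℕ) (c : ℕ → ℝ) (z : ℝ) (f : ℝ → ℝ) (s : ℕ) (ε : ℝ)
    (i : ℕ) (h : ℝ) : ℝ :=
  (1 / (((R / 2 : ℕ) : ℝ) + 1)) *
    (1 + (wenoD R c z f h) ^ s / ((wenoI R c z f i h) ^ s + ε))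

/-- Normalized WENO weight `ω_{R,i,h}`. -/
noncomputable def wenoOmega (R : ℕ) (c : ℕ → ℝ) (z : ℝ) (f : ℝ → ℝ) (s : ℕ) (ε : ℝ)
    (i : ℕ) (h : ℝ) : ℝ :=
  wenoAlpha R c z f s ε i h / ∑ j ∈ Finset.range (R / 2 + 1), wenoAlpha R c z f s ε j h

/-- Global average weight `ω_{R,h}`. -/
noncomputable def wenoOmegaG (R : ℕ) (c : ℕ → ℝ) (z : ℝ) (f : ℝ → ℝ) (s : ℕ) (ε : ℝ)
    (h : ℝ) : ℝ :=
  1 / (1 + (wenoD R c z f h) ^ s *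
        ∑ i ∈ Finset.range (R / 2 + 1), 1 / ((wenoI R c z f i h) ^ s + ε))

/-!
Consider a linear combination `∑ wᵢ f(z + cᵢ h)`. If its Taylor terms of order `< n` cancel, it
equals `(hⁿ / n!) (∑ wᵢ cᵢⁿ) f⁽ⁿ⁾(z) + o(hⁿ)`. This applies in two ways.

* The weights `1 / ∏ (cᵢ - cⱼ)` annihilate all polynomials of degree `< R - 1`, whence
  `d = O(h^(2(R-1)))`.
* At a critical point of order `k`, the terms of order `1, …, k` of a two-point difference vanish
  together with the derivatives of `f`, so `f(x_{j+1}) - f(x_j)` has exact order `k + 1` unless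
  `c_{j+1}^(k+1) = c_j^(k+1)`, that is, unless `k` is odd and `c_{j+1} = -c_j`. Consecutive pairs
  cannot both be symmetric in this way, and `I` sums over at least two of them when `R ≥ 5`; for
  `R < 5` and `k` odd there are no symmetric pairs by assumption. Hence `h^(2(k+1)) = O(I)`.

The quotient `d / I` is therefore `O(h^(2(R-2-k)))`, and dropping `ε` only increases
`dˢ / (Iˢ + ε)`.
-/

section

open Filter Finset Asymptotics Topology
open scoped Nat

theorem exists_pos_eventually_forall_norm_le {ι α E F : Type*} [Norm E]
    [SeminormedAddCommGroup F] {l : Filter α} {s : Finset ι} {u : ι → α → E} {v : ι → α → F}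
    (huv : ∀ i ∈ s, u i =O[l] v i) :
    ∃ C > 0, ∀ᶠ x in l, ∀ i ∈ s, ‖u i x‖ ≤ C * ‖v i x‖ := by
  have eventually_bound : ∀ᶠ C in atTop, ∀ i ∈ s, IsBigOWith C l (u i) (v i) :=
    (eventually_all_finset s).2 fun i hi => isBigO_iff_eventually_isBigOWith.1 (huv i hi)
  obtain ⟨C, hC, bound⟩ := ((eventually_gt_atTop 0).and eventually_bound).exists
  exact ⟨C, hC, (eventually_all_finset s).2 fun i hi => (bound i hi).bound⟩

section TaylorExpansion

variable {E : Type*} [NormedAddCommGroup E] [NormedSpace ℝ E] {f : ℝ → E} {z : ℝ} {n : ℕ}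

theorem isLittleO_sub_taylor_of_contDiffAt (hf : ContDiffAt ℝ n f z) :
    (fun t => f (z + t) - ∑ j ∈ range (n + 1), ((j ! : ℝ)⁻¹ * t ^ j) • iteratedDeriv j f z)
      =o[𝓝 0] fun t => t ^ n := by
  obtain ⟨u, hu, hfu⟩ := hf.contDiffOn le_rfl (by simp)
  obtain ⟨δ, hδ, ball_subset⟩ := Metric.mem_nhds_iff.1 hu
  have hz : z ∈ Metric.ball z δ := Metric.mem_ball_self hδ
  have taylor := taylor_isLittleO (convex_ball z δ) hz (hfu.mono ball_subset)
  rw [Metric.isOpen_ball.nhdsWithin_eq hz] at taylor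
  have shift : Tendsto (fun t => z + t) (𝓝 0) (𝓝 z) := by
    simpa using (continuous_const_add z).tendsto 0
  refine (taylor.comp_tendsto shift).congr (fun t => ?_) (fun t => ?_)
  · simp only [Function.comp_apply, taylor_within_apply, add_sub_cancel_left,
      iteratedDerivWithin_of_isOpen Metric.isOpen_ball hz]
  · simp only [Function.comp_apply, add_sub_cancel_left]

theorem isLittleO_sum_smul_sub_of_forall_lt {ι : Type*} (s : Finset ι) (w c : ι → ℝ)
    (hf : ContDiffAt ℝ n f z)
    (hcancel : ∀ j < n, (∑ i ∈ s, w i * c i ^ j) • iteratedDeriv j f z = 0) :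
    (fun h => ∑ i ∈ s, w i • f (z + c i * h) -
        ((n ! : ℝ)⁻¹ * h ^ n) • (∑ i ∈ s, w i * c i ^ n) • iteratedDeriv n f z)
      =o[𝓝 0] fun h => h ^ n := by
  have remainder (a : ℝ) : (fun h => f (z + a * h) -
      ∑ j ∈ range (n + 1), ((j ! : ℝ)⁻¹ * (a * h) ^ j) • iteratedDeriv j f z)
        =o[𝓝 0] fun h => h ^ n := by
    have scale : Tendsto (fun h => a * h) (𝓝 0) (𝓝 0) := by
      simpa using (continuous_const_mul a).tendsto 0
    refine ((isLittleO_sub_taylor_of_contDiffAt hf).comp_tendsto scale).trans_isBigO ?_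
    simpa only [Function.comp_def, mul_pow] using isBigO_const_mul_self (a ^ n) (· ^ n) (𝓝 0)
  have taylor_sum (h : ℝ) :
      ∑ i ∈ s, w i • ∑ j ∈ range (n + 1), ((j ! : ℝ)⁻¹ * (c i * h) ^ j) • iteratedDeriv j f z =
        ((n ! : ℝ)⁻¹ * h ^ n) • (∑ i ∈ s, w i * c i ^ n) • iteratedDeriv n f z := by
    calc
      _ = ∑ j ∈ range (n + 1),
            ((j ! : ℝ)⁻¹ * h ^ j) • (∑ i ∈ s, w i * c i ^ j) • iteratedDeriv j f z := by
        simp only [smul_sum, sum_smul, smul_smul]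
        rw [sum_comm]
        refine sum_congr rfl fun j _ => sum_congr rfl fun i _ => ?_
        congr 1
        ring
      _ = _ := by
        rw [sum_range_succ, sum_eq_zero, zero_add]
        intro j hj
        rw [hcancel j (mem_range.1 hj), smul_zero]
  have remainder_sum := IsLittleO.fun_sum (s := s) fun i _ =>
    (remainder (c i)).const_smul_left (w i)
  simpa only [Pi.smul_apply, smul_sub, sum_sub_distrib, taylor_sum] using remainder_sum

theorem isBigO_sum_smul_of_moments_eq_zero {ι : Type*} (s : Finset ι) (w c : ι → ℝ)
    (hf : ContDiffAt ℝ n f z) (hmoment : ∀ j < n, ∑ i ∈ s, w i * c i ^ j = 0) :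
    (fun h => ∑ i ∈ s, w i • f (z + c i * h)) =O[𝓝 0] fun h => h ^ n := by
  have expansion := isLittleO_sum_smul_sub_of_forall_lt s w c hf fun j hj => by
    rw [hmoment j hj, zero_smul]
  have leading : (fun h : ℝ =>
      ((n ! : ℝ)⁻¹ * h ^ n) • (∑ i ∈ s, w i * c i ^ n) • iteratedDeriv n f z)
        =O[𝓝 0] fun h => h ^ n := by
    simpa only [smul_eq_mul, mul_one] using
      (isBigO_const_mul_self (n ! : ℝ)⁻¹ (· ^ n) (𝓝 0)).smul
        (isBigO_const_const ((∑ i ∈ s, w i * c i ^ n) • iteratedDeriv n f z)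
          (one_ne_zero (α := ℝ)) (𝓝 0))
  simpa only [sub_add_cancel] using expansion.isBigO.add leading

theorem pow_succ_isBigO_sub_of_iteratedDeriv_ne_zero {k : ℕ} {a b : ℝ}
    (hf : ContDiffAt ℝ (k + 1 : ℕ) f z) (hcrit : ∀ j, 1 ≤ j → j ≤ k → iteratedDeriv j f z = 0)
    (hk1 : iteratedDeriv (k + 1) f z ≠ 0) (hab : a ^ (k + 1) ≠ b ^ (k + 1)) :
    (fun h => h ^ (k + 1)) =O[𝓝 0] fun h => f (z + a * h) - f (z + b * h) := by
  have hcancel : ∀ j < k + 1,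
      (∑ i : Fin 2, ![1, -1] i * ![a, b] i ^ j) • iteratedDeriv j f z = 0 := by
    rintro (_ | j) hj
    · simp
    · rw [hcrit (j + 1) (by lia) (by lia), smul_zero]
  have leading_ne_zero :
      (∑ i : Fin 2, ![1, -1] i * ![a, b] i ^ (k + 1)) • iteratedDeriv (k + 1) f z ≠ 0 :=
    smul_ne_zero (by simpa [← sub_eq_add_neg, sub_eq_zero] using hab) hk1
  have expansion := isLittleO_sum_smul_sub_of_forall_lt univ ![1, -1] ![a, b] hf hcancel
  have leading : (fun h : ℝ => h ^ (k + 1)) =O[𝓝 0] fun h : ℝ => (((k + 1)! : ℝ)⁻¹ * h ^ (k + 1)) •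
      (∑ i : Fin 2, ![1, -1] i * ![a, b] i ^ (k + 1)) • iteratedDeriv (k + 1) f z := by
    have factorial_ne_zero : ((k + 1)! : ℝ)⁻¹ ≠ 0 := by positivity
    simpa only [smul_eq_mul, mul_one] using
      (isBigO_self_const_mul factorial_ne_zero (· ^ (k + 1)) (𝓝 0)).smul
        (isBigO_const_const (1 : ℝ) leading_ne_zero (𝓝 0))
  simpa [← sub_eq_add_neg] using
    leading.trans (expansion.trans_isBigO leading).right_isBigO_add

end TaylorExpansion

theorem sum_pow_div_prod_sub_eq_zero {F ι : Type*} [Field F] [DecidableEq ι] {s : Finset ι}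
    {c : ι → F} (hc : Set.InjOn c s) {j : ℕ} (hj : j < #s - 1) :
    ∑ i ∈ s, c i ^ j / ∏ l ∈ s.erase i, (c i - c l) = 0 := by
  have hdeg : (Polynomial.X ^ j : Polynomial F).degree < #s := by
    rw [Polynomial.degree_X_pow]
    exact_mod_cast (by lia : j < #s)
  simpa [Polynomial.coeff_X_pow, hj.ne'] using (Lagrange.coeff_eq_sum hc hdeg).symm

section Weno

variable {R : ℕ} {c : ℕ → ℝ} {z : ℝ} {f : ℝ → ℝ} {k i : ℕ}

theorem wenoI_nonneg (R : ℕ) (c : ℕ → ℝ) (z : ℝ) (f : ℝ → ℝ) (i : ℕ) (h : ℝ) :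
    0 ≤ wenoI R c z f i h :=
  sum_nonneg fun _ _ => sq_nonneg _

theorem wenoD_nonneg (R : ℕ) (c : ℕ → ℝ) (z : ℝ) (f : ℝ → ℝ) (h : ℝ) :
    0 ≤ wenoD R c z f h :=
  sq_nonneg _

theorem wenoD_isBigO_pow (hc : Set.InjOn c (range R)) (hf : ContDiffAt ℝ (R - 1 : ℕ) f z) :
    wenoD R c z f =O[𝓝 0] fun h => (h ^ (R - 1)) ^ 2 := by
  have hmoment : ∀ j < R - 1,
      ∑ i ∈ range R, (∏ l ∈ (range R).erase i, (c i - c l))⁻¹ * c i ^ j = 0 := fun j hj => by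
    simpa only [div_eq_inv_mul] using sum_pow_div_prod_sub_eq_zero hc (by simpa using hj)
  have hdiff := isBigO_sum_smul_of_moments_eq_zero _ _ c hf hmoment
  simp only [smul_eq_mul, ← div_eq_inv_mul] at hdiff
  exact (hdiff.const_mul_left _).pow 2

theorem pow_isBigO_wenoI {j : ℕ} (hf : ContDiffAt ℝ (k + 1 : ℕ) f z)
    (hcrit : ∀ j, 1 ≤ j → j ≤ k → iteratedDeriv j f z = 0)
    (hk1 : iteratedDeriv (k + 1) f z ≠ 0)
    (hj : j ∈ Ico i (i + (R - 1) / 2)) (hpow : c (j + 1) ^ (k + 1) ≠ c j ^ (k + 1)) :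
    (fun h => (h ^ (k + 1)) ^ 2) =O[𝓝 0] wenoI R c z f i := by
  have gap_ne_zero : c (j + 1) - c j ≠ 0 := sub_ne_zero.2 fun heq => hpow (by rw [heq])
  have hslope : (fun h => h ^ (k + 1)) =O[𝓝 0]
      fun h => (f (z + c (j + 1) * h) - f (z + c j * h)) / (c (j + 1) - c j) := by
    simp only [div_eq_inv_mul]
    exact (pow_succ_isBigO_sub_of_iteratedDeriv_ne_zero hf hcrit hk1 hpow).trans
      (isBigO_self_const_mul (inv_ne_zero gap_ne_zero) _ _)
  refine (hslope.pow 2).trans (IsBigO.of_norm_le fun h => ?_)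
  rw [Real.norm_of_nonneg (sq_nonneg _)]
  exact single_le_sum
    (f := fun j => ((f (z + c (j + 1) * h) - f (z + c j * h)) / (c (j + 1) - c j)) ^ 2)
    (fun _ _ => sq_nonneg _) hj

theorem exists_mem_Ico_pow_succ_ne (hR : 3 ≤ R) (hc : Set.InjOn c (range R))
    (hexc : 5 ≤ R ∨ Even k ∨ ∀ j ≤ R - 2, c j + c (j + 1) ≠ 0) (hi : i ≤ R / 2) :
    ∃ j ∈ Ico i (i + (R - 1) / 2), c (j + 1) ^ (k + 1) ≠ c j ^ (k + 1) := by
  by_contra! hpow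
  have symmetric_pair : ∀ j ∈ Ico i (i + (R - 1) / 2), c (j + 1) = -c j ∧ Even (k + 1) := by
    intro j hj
    have hjR : j + 1 < R := by have := mem_Ico.1 hj; lia
    rcases pow_eq_pow_iff_cases.1 (hpow j hj) with hzero | heq | hneg
    · exact absurd hzero k.succ_ne_zero
    · exact absurd (hc (mem_range.2 hjR) (mem_range.2 (by lia)) heq) j.succ_ne_self
    · exact hneg
  obtain ⟨hneg, hk⟩ := symmetric_pair i (mem_Ico.2 (by lia))
  rcases hexc with hR5 | hk_even | hasymm
  · obtain ⟨hneg', -⟩ := symmetric_pair (i + 1) (mem_Ico.2 (by lia))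
    have hcoincide : c (i + 1 + 1) = c i := by rw [hneg', hneg, neg_neg]
    have : i + 1 + 1 = i := hc (mem_range.2 (by lia)) (mem_range.2 (by lia)) hcoincide
    lia
  · exact Nat.not_even_iff_odd.2 hk_even.add_one hk
  · exact hasymm i (by lia) (by rw [hneg, add_neg_cancel])

theorem wenoD_isBigO_mul_wenoI (hR : 3 ≤ R) (hc : Set.InjOn c (range R))
    (hf : ContDiffAt ℝ (R - 1 : ℕ) f z) (hk : k ≤ R - 2)
    (hcrit : ∀ j, 1 ≤ j → j ≤ k → iteratedDeriv j f z = 0)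
    (hk1 : iteratedDeriv (k + 1) f z ≠ 0)
    (hexc : 5 ≤ R ∨ Even k ∨ ∀ j ≤ R - 2, c j + c (j + 1) ≠ 0) (hi : i ≤ R / 2) :
    wenoD R c z f =O[𝓝 0] fun h => h ^ (2 * (R - 2 - k)) * wenoI R c z f i h := by
  obtain ⟨j, hj, hpow⟩ := exists_mem_Ico_pow_succ_ne hR hc hexc hi
  have hf' : ContDiffAt ℝ (k + 1 : ℕ) f z := hf.of_le (mod_cast (by lia))
  refine (wenoD_isBigO_pow hc hf).trans
    (((isBigO_refl (fun h => h ^ (2 * (R - 2 - k))) _).mul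
      (pow_isBigO_wenoI hf' hcrit hk1 hj hpow)).congr_left fun h => ?_)
  rw [← pow_mul, ← pow_mul, ← pow_add]
  congr 1
  lia

theorem abs_wenoAlpha_sub_le {ε h B : ℝ} (s : ℕ) (hε : 0 < ε) (hB : 0 ≤ B)
    (hDI : wenoD R c z f h ≤ B * wenoI R c z f i h) :
    |wenoAlpha R c z f s ε i h - 1 / (((R / 2 : ℕ) : ℝ) + 1)| ≤ B ^ s := by
  have hI := wenoI_nonneg R c z f i h
  have hD := wenoD_nonneg R c z f h
  have hquot : wenoD R c z f h ^ s / (wenoI R c z f i h ^ s + ε) ≤ B ^ s := by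
    rw [div_le_iff₀ (by positivity)]
    calc
      wenoD R c z f h ^ s ≤ (B * wenoI R c z f i h) ^ s := by gcongr
      _ = B ^ s * wenoI R c z f i h ^ s := mul_pow ..
      _ ≤ B ^ s * (wenoI R c z f i h ^ s + ε) := by gcongr; exact le_add_of_nonneg_right hε.le
  have hprefactor : 1 / (((R / 2 : ℕ) : ℝ) + 1) ≤ 1 :=
    div_le_one_of_le₀ (by simp) (by positivity)
  rw [wenoAlpha, mul_one_add, add_sub_cancel_left, abs_of_nonneg (by positivity)]
  exact (mul_le_of_le_one_left (by positivity) hprefactor).trans hquot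

end Weno

end

theorem stmt_6_general {R : ℕ} (hR : 3 ≤ R) {c : ℕ → ℝ} (hc : Set.InjOn c (Finset.range R))
    {z : ℝ} {f : ℝ → ℝ} (hf : ContDiffAt ℝ (R - 1 : ℕ) f z) {k : ℕ} (hk : k ≤ R - 2)
    (hcrit : ∀ j : ℕ, 1 ≤ j → j ≤ k → iteratedDeriv j f z = 0)
    (hk1 : iteratedDeriv (k + 1) f z ≠ 0)
    (hexc : 5 ≤ R ∨ Even k ∨ ∀ j : ℕ, j ≤ R - 2 → c j + c (j + 1) ≠ 0) (s : ℕ) :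
    ∃ C > (0 : ℝ), ∃ h₀ > (0 : ℝ), ∀ ε > (0 : ℝ), ∀ h : ℝ, |h| < h₀ →
      ∀ i ≤ R / 2,
        |wenoAlpha R c z f s ε i h - 1 / (((R / 2 : ℕ) : ℝ) + 1)|
          ≤ C * h ^ (2 * s * (R - 2 - k)) := by
  obtain ⟨C, hC, hbound⟩ := exists_pos_eventually_forall_norm_le (s := Finset.range (R / 2 + 1))
    fun i hi => wenoD_isBigO_mul_wenoI hR hc hf hk hcrit hk1 hexc (Finset.mem_range_succ_iff.1 hi)
  obtain ⟨h₀, hh₀, hbound⟩ := Metric.eventually_nhds_iff.1 hbound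
  refine ⟨C ^ s, pow_pos hC s, h₀, hh₀, fun ε hε h hh i hi => ?_⟩
  have hpow : 0 ≤ h ^ (2 * (R - 2 - k)) := (even_two_mul _).pow_nonneg h
  have hDI : wenoD R c z f h ≤ C * h ^ (2 * (R - 2 - k)) * wenoI R c z f i h := by
    have := hbound (by simpa using hh) i (Finset.mem_range_succ_iff.2 hi)
    rwa [Real.norm_of_nonneg (wenoD_nonneg ..),
      Real.norm_of_nonneg (mul_nonneg hpow (wenoI_nonneg ..)), ← mul_assoc] at this
  calc
    _ ≤ (C * h ^ (2 * (R - 2 - k))) ^ s := abs_wenoAlpha_sub_le s hε (by positivity) hDI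
    _ = C ^ s * h ^ (2 * s * (R - 2 - k)) := by rw [mul_pow, ← pow_mul, mul_right_comm]

/-- **Unnormalized weights in the smooth case.** If `f` is `C^∞` near `z` with a critical point
of exact order `k ≤ R-2`, and either `R ≥ 5`, or `k` is even, or no node pair is symmetric,
then `α_{R,i,h} = 1/(r'+1) + O(h^{2s(R-2-k)})`, uniformly in `ε > 0`. -/
theorem stmt_6 (R : ℕ) (hR : 3 ≤ R) (c : ℕ → ℝ)
    (hc : ∀ i j : ℕ, i < j → j < R → c i < c j)
    (z : ℝ) (f : ℝ → ℝ) (U : Set ℝ) (hU : U ∈ nhds z)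
    (hf : ContDiffOn ℝ (⊤ : ℕ∞) f U)
    (k : ℕ) (hk : k ≤ R - 2)
    (hcrit : ∀ j : ℕ, 1 ≤ j → j ≤ k → iteratedDeriv j f z = 0)
    (hk1 : iteratedDeriv (k + 1) f z ≠ 0)
    (hexc : 5 ≤ R ∨ Even k ∨ ∀ j : ℕ, j ≤ R - 2 → c j + c (j + 1) ≠ 0)
    (s : ℕ) (hs : 1 ≤ s) :
    ∃ C > (0 : ℝ), ∃ h₀ > (0 : ℝ), ∀ ε > (0 : ℝ), ∀ h : ℝ, 0 < h → h < h₀ →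
      ∀ i ≤ R / 2,
        |wenoAlpha R c z f s ε i h - 1 / (((R / 2 : ℕ) : ℝ) + 1)|
          ≤ C * h ^ (2 * s * (R - 2 - k)) := by
  have hinj : Set.InjOn c (Finset.range R) := StrictMonoOn.injOn fun i _ j hj hij =>
    hc i j hij (Finset.mem_range.1 hj)
  have hf' : ContDiffAt ℝ (R - 1 : ℕ) f z := contDiffAt_infty.1 (hf.contDiffAt hU) (R - 1)
  obtain ⟨C, hC, h₀, hh₀, hbound⟩ := stmt_6_general hR hinj hf' hk hcrit hk1 hexc s
  exact ⟨C, hC, h₀, hh₀, fun ε hε h hpos hlt => hbound ε hε h (by rwa [abs_of_pos hpos])⟩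
end

section
/- Let R ≥ 1 be an integer, c_0 < c_1 < ⋯ < c_{R−1}, z and c* real numbers, and let f be of class C^R on a neighborhood of z. Then the Lagrange reconstruction of f from the nodes z + c_i·h evaluated at z + c*·h has error O(h^R): there exist C > 0 and h₀ > 0 such that for all 0 < h < h₀, |Σ_{i=0}^{R−1} [Π_{j=0, j≠i}^{R−1} (c* − c_j)/(c_i − c_j)]·f(z + c_i·h) − f(z + c*·h)| ≤ C·h^R. -/
/-!
A linear combination of values `f (z + cᵢ h)` that reproduces the monomials of degree `< n` kills
the Taylor polynomial of `f` at `z` at every scale `h`, so that only the `O(hⁿ)` Taylor remainders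
survive. The Lagrange weights do not depend on `h`, and they reproduce every polynomial of degree
less than the number of nodes.
-/

open Asymptotics Filter Finset Polynomial Topology

section LagrangeBasis

variable {F ι : Type*} [Field F] [DecidableEq ι] {s : Finset ι} {v : ι → F}

theorem eval_lagrangeBasis (s : Finset ι) (v : ι → F) (i : ι) (t : F) :
    (Lagrange.basis s v i).eval t = ∏ j ∈ s.erase i, (t - v j) / (v i - v j) := by
  simp only [Lagrange.basis, Lagrange.basisDivisor, eval_prod, eval_mul, eval_C, eval_sub, eval_X,
    div_eq_inv_mul]

theorem sum_eval_lagrangeBasis_mul_eval (hv : Set.InjOn v s) {P : F[X]} (hP : P.degree < #s)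
    (t : F) : ∑ i ∈ s, (Lagrange.basis s v i).eval t * P.eval (v i) = P.eval t := by
  conv_rhs => rw [Lagrange.eq_interpolate hv hP, Lagrange.interpolate_apply]
  simp only [eval_finsetSum, eval_mul, eval_C, mul_comm]

theorem sum_prod_div_mul_pow (hv : Set.InjOn v s) {k : ℕ} (hk : k < #s) (t : F) :
    ∑ i ∈ s, (∏ j ∈ s.erase i, (t - v j) / (v i - v j)) * v i ^ k = t ^ k := by
  have hdeg : (X ^ k : F[X]).degree < #s := by
    rw [degree_X_pow]
    exact_mod_cast hk
  simpa only [eval_lagrangeBasis, eval_pow, eval_X] using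
    sum_eval_lagrangeBasis_mul_eval hv hdeg t

end LagrangeBasis

theorem sum_smul_sum_mul_pow_smul_eq {𝕜 M ι : Type*} [CommSemiring 𝕜] [AddCommMonoid M]
    [Module 𝕜 M] {s : Finset ι} {w c : ι → 𝕜} {t : 𝕜} {n : ℕ}
    (hw : ∀ k < n, ∑ i ∈ s, w i * c i ^ k = t ^ k) (a : ℕ → M) (h : 𝕜) :
    ∑ i ∈ s, w i • ∑ k ∈ range n, (c i * h) ^ k • a k = ∑ k ∈ range n, (t * h) ^ k • a k := by
  simp only [smul_sum, smul_smul]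
  rw [sum_comm]
  refine sum_congr rfl fun k hk => ?_
  simp only [mul_pow, ← mul_assoc]
  rw [← sum_smul, ← sum_mul, hw k (mem_range.1 hk)]

theorem exists_pos_forall_norm_le_of_isBigO_nhdsGT_zero {E : Type*} [SeminormedAddCommGroup E]
    {f : ℝ → E} {g : ℝ → ℝ} (hg : ∀ h > 0, 0 ≤ g h) (hfg : f =O[𝓝[>] 0] g) :
    ∃ C > (0 : ℝ), ∃ δ > (0 : ℝ), ∀ h, 0 < h → h < δ → ‖f h‖ ≤ C * g h := by
  obtain ⟨C, hC, hbound⟩ := hfg.exists_pos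
  obtain ⟨δ, hδ, hsub⟩ := mem_nhdsGT_iff_exists_Ioo_subset.1 hbound.bound
  refine ⟨C, hC, δ, hδ, fun h h_pos h_lt => ?_⟩
  simpa only [Set.mem_ofPred_eq, Real.norm_of_nonneg (hg h h_pos)] using hsub ⟨h_pos, h_lt⟩

section Taylor

variable {E : Type*} [NormedAddCommGroup E] [NormedSpace ℝ E] {f : ℝ → E} {z : ℝ} {n : ℕ}

theorem exists_isBigO_sub_sum_pow_smul (hf : ContDiffAt ℝ n f z) :
    ∃ a : ℕ → E, (fun x => f x - ∑ k ∈ range n, (x - z) ^ k • a k) =O[𝓝 z]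
      fun x => (x - z) ^ n := by
  obtain ⟨u, hu, hfu⟩ := hf.contDiffOn le_rfl (by simp)
  obtain ⟨ε, hε, hball⟩ := Metric.mem_nhds_iff.1 hu
  let a (k : ℕ) : E := (k.factorial : ℝ)⁻¹ • iteratedDerivWithin k f (Metric.ball z ε) z
  have htaylor (x : ℝ) : taylorWithinEval f n (Metric.ball z ε) z x =
      ∑ k ∈ range n, (x - z) ^ k • a k + (x - z) ^ n • a n := by
    simp only [taylor_within_apply, ← sum_range_succ, a, smul_smul, mul_comm]
  have hremainder := taylor_isLittleO (convex_ball z ε) (Metric.mem_ball_self hε) (hfu.mono hball)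
  rw [Metric.isOpen_ball.nhdsWithin_eq (Metric.mem_ball_self hε)] at hremainder
  have hlast : (fun x => (x - z) ^ n • a n) =O[𝓝 z] fun x => (x - z) ^ n :=
    .of_bound ‖a n‖ <| .of_forall fun x => by rw [norm_smul, mul_comm]
  refine ⟨a, (hremainder.isBigO.add hlast).congr_left fun x => ?_⟩
  rw [htaylor]
  abel

theorem exists_forall_isBigO_sub_sum_mul_pow_smul (hf : ContDiffAt ℝ n f z) :
    ∃ a : ℕ → E, ∀ d : ℝ, (fun h => f (z + d * h) - ∑ k ∈ range n, (d * h) ^ k • a k) =O[𝓝 0]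
      fun h => h ^ n := by
  obtain ⟨a, ha⟩ := exists_isBigO_sub_sum_pow_smul hf
  refine ⟨a, fun d => ?_⟩
  have htendsto : Tendsto (fun h => z + d * h) (𝓝 0) (𝓝 z) :=
    Continuous.tendsto' (by fun_prop) _ _ (by simp)
  have hscale : (fun h : ℝ => (d * h) ^ n) =O[𝓝 0] fun h => h ^ n := by
    simpa only [mul_pow] using isBigO_const_mul_self (d ^ n) (fun h : ℝ => h ^ n) (𝓝 0)
  have hcomp := ha.comp_tendsto htendsto
  simp only [Function.comp_def, add_sub_cancel_left] at hcomp
  exact hcomp.trans hscale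

theorem isBigO_sum_smul_sub_of_sum_mul_pow_eq {ι : Type*} {s : Finset ι} {w c : ι → ℝ} {t : ℝ}
    (hw : ∀ k < n, ∑ i ∈ s, w i * c i ^ k = t ^ k) (hf : ContDiffAt ℝ n f z) :
    (fun h => ∑ i ∈ s, w i • f (z + c i * h) - f (z + t * h)) =O[𝓝 0] fun h => h ^ n := by
  obtain ⟨a, ha⟩ := exists_forall_isBigO_sub_sum_mul_pow_smul hf
  have hsum : (fun h => ∑ i ∈ s, w i • (f (z + c i * h) - ∑ k ∈ range n, (c i * h) ^ k • a k))
      =O[𝓝 0] fun h => h ^ n :=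
    .fun_sum fun i _ => (ha (c i)).const_smul_left (w i)
  refine (hsum.sub (ha t)).congr_left fun h => ?_
  simp only [smul_sub, sum_sub_distrib, sum_smul_sum_mul_pow_smul_eq hw a h]
  abel

end Taylor

theorem stmt_11_general {E ι : Type*} [NormedAddCommGroup E] [NormedSpace ℝ E] [DecidableEq ι]
    {s : Finset ι} {c : ι → ℝ} (hc : Set.InjOn c s) {z : ℝ} (cstar : ℝ) {f : ℝ → E}
    (hf : ContDiffAt ℝ #s f z) :
    (fun h => ∑ i ∈ s, (∏ j ∈ s.erase i, (cstar - c j) / (c i - c j)) • f (z + c i * h)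
      - f (z + cstar * h)) =O[𝓝 0] fun h => h ^ #s :=
  isBigO_sum_smul_sub_of_sum_mul_pow_eq (fun _ hk => sum_prod_div_mul_pow hc hk cstar) hf

/-- **Lagrange reconstruction error.** For `f` of class `C^R` near `z`, the Lagrange
interpolation of `f` at the nodes `z + cᵢ h` evaluated at `z + c* h` has error `O(h^R)`. -/
theorem stmt_11 (R : ℕ) (hR : 1 ≤ R) (c : ℕ → ℝ)
    (hc : ∀ i j : ℕ, i < j → j < R → c i < c j)
    (z cstar : ℝ) (f : ℝ → ℝ) (U : Set ℝ) (hU : U ∈ nhds z)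
    (hf : ContDiffOn ℝ (R : ℕ) f U) :
    ∃ C > (0 : ℝ), ∃ h₀ > (0 : ℝ), ∀ h : ℝ, 0 < h → h < h₀ →
      |(∑ i ∈ Finset.range R,
          (∏ j ∈ (Finset.range R).erase i, (cstar - c j) / (c i - c j)) * f (z + c i * h))
          - f (z + cstar * h)| ≤ C * h ^ R := by
  have hmono : StrictMonoOn c (range R) := fun i _ j hj hij => hc i j hij (by simpa using hj)
  have herror := stmt_11_general hmono.injOn cstar (by simpa using hf.contDiffAt hU)
  simpa using exists_pos_forall_norm_le_of_isBigO_nhdsGT_zero (fun h h_pos => by positivity)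
    (herror.mono nhdsWithin_le_nhds)
end
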